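/- Let A be a GLD-lattice and, for each GLD-filter F of A, let N(F) be the collection of all sets X of GLD-filters such that η(x) ∩ (η(y))ᶜ ⊆ X for some x, y ∈ A with □x ∈ F and ◇y ∉ F. Then N is a GLD-filter frame of A; in particular: (1) η(x) ∈ N(F) whenever □x ∈ F, and (η(x))ᶜ ∈ N(F) whenever ◇x ∉ F; and (2) if □x ∉ F then η(x) ∉ N(F), and if ◇x ∈ F then (η(x))ᶜ ∉ N(F). -/

import Mathlib

/-!
GLD-filters separate points: the approximation axioms reduce `a ≰ c` to `a ⊓ □ⁿ⊥ ≰ c ⊔ ◇ᵐ⊤` for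
some `n` and `m`, and every prime filter that contains the first of these elements and omits the
second is a GLD-filter. Hence an inclusion `η(a) ∩ η(b)ᶜ ⊆ η(x)` means `a ≤ x ⊔ b`, which gives
`□a ≤ □x ⊔ ◇b`, so that `□a ∈ F` and `◇b ∉ F` force `□x ∈ F`. Likewise `η(a) ∩ η(b)ᶜ ⊆ η(x)ᶜ`
means `a ⊓ x ≤ b`, which gives `□a ⊓ ◇x ≤ ◇b`, so that `◇x ∉ F`.
-/

/-- A GLD-lattice structure on a bounded distributive lattice `A`, given by the
modal operations `box` and `dia`. -/
structure IsGLDLattice {A : Type*} [DistribLattice A] [BoundedOrder A]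
    (box dia : A → A) : Prop where
  box_top : box ⊤ = ⊤
  dia_bot : dia ⊥ = ⊥
  box_sup_le : ∀ x y : A, box (x ⊔ y) ≤ box x ⊔ dia y
  inf_dia_le : ∀ x y : A, box x ⊓ dia y ≤ dia (x ⊓ y)
  dia_sup : ∀ x y : A, dia (x ⊔ y) = dia x ⊔ dia y
  box_inf : ∀ x y : A, box (x ⊓ y) = box x ⊓ box y
  dia_dia_le : ∀ x : A, dia (dia x) ≤ dia x
  box_le_box_box : ∀ x : A, box x ≤ box (box x)
  isLUB_inf_boxIter : ∀ x : A, IsLUB {y : A | ∃ n : ℕ, y = x ⊓ box^[n] ⊥} x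
  isGLB_sup_diaIter : ∀ x : A, IsGLB {y : A | ∃ n : ℕ, y = x ⊔ dia^[n] ⊤} x

/-- A GLD-filter of `A`: a prime filter `F` such that for some `n`,
`◇ⁿ⊤ ∉ F` and `□ⁿ⊥ ∈ F`. -/
structure IsGLDFilter {A : Type*} [DistribLattice A] [BoundedOrder A]
    (box dia : A → A) (F : Set A) : Prop where
  nonempty : F.Nonempty
  mem_of_le : ∀ x y : A, x ∈ F → x ≤ y → y ∈ F
  inf_mem : ∀ x y : A, x ∈ F → y ∈ F → x ⊓ y ∈ F
  bot_not_mem : ⊥ ∉ F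
  prime : ∀ x y : A, x ⊔ y ∈ F → x ∈ F ∨ y ∈ F
  gld : ∃ n : ℕ, dia^[n] ⊤ ∉ F ∧ box^[n] ⊥ ∈ F

/-- The type of GLD-filters of `A`. -/
def GLDFilter (A : Type*) [DistribLattice A] [BoundedOrder A] (box dia : A → A) :=
  {F : Set A // IsGLDFilter box dia F}

/-- `eta x` is the set of GLD-filters containing `x`. -/
def eta {A : Type*} [DistribLattice A] [BoundedOrder A] (box dia : A → A)
    (x : A) : Set (GLDFilter A box dia) :=
  {F | x ∈ F.1}

/-- A GLD-filter frame of `A`: each `N F` is a filter of the powerset of the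
set of GLD-filters, and the neighborhood conditions relating `N` to `box`,
`dia` and `eta` hold. -/
structure IsGLDFilterFrame {A : Type*} [DistribLattice A] [BoundedOrder A]
    (box dia : A → A)
    (N : GLDFilter A box dia → Set (Set (GLDFilter A box dia))) : Prop where
  nonempty : ∀ F, (N F).Nonempty
  mem_of_subset : ∀ F, ∀ X Y : Set (GLDFilter A box dia),
    X ∈ N F → X ⊆ Y → Y ∈ N F
  inter_mem : ∀ F, ∀ X Y : Set (GLDFilter A box dia),
    X ∈ N F → Y ∈ N F → X ∩ Y ∈ N F
  eta_mem : ∀ F x, box x ∈ F.1 → eta box dia x ∈ N F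
  compl_eta_mem : ∀ F x, dia x ∉ F.1 → (eta box dia x)ᶜ ∈ N F
  eta_not_mem : ∀ F x, box x ∉ F.1 → eta box dia x ∉ N F
  compl_eta_not_mem : ∀ F x, dia x ∈ F.1 → (eta box dia x)ᶜ ∉ N F

/-- The box operator on the powerset of the set of GLD-filters induced by a
neighborhood map `N`. -/
def boxZ {A : Type*} [DistribLattice A] [BoundedOrder A] (box dia : A → A)
    (N : GLDFilter A box dia → Set (Set (GLDFilter A box dia))) :
    Set (GLDFilter A box dia) → Set (GLDFilter A box dia) :=
  fun X => {F | X ∈ N F}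

/-- The diamond operator induced by a neighborhood map `N`. -/
def diaZ {A : Type*} [DistribLattice A] [BoundedOrder A] (box dia : A → A)
    (N : GLDFilter A box dia → Set (Set (GLDFilter A box dia))) :
    Set (GLDFilter A box dia) → Set (GLDFilter A box dia) :=
  fun X => (boxZ box dia N Xᶜ)ᶜ

/-- The canonical neighborhood map of a GLD-lattice. -/
def canonN {A : Type*} [DistribLattice A] [BoundedOrder A] (box dia : A → A)
    (F : GLDFilter A box dia) : Set (Set (GLDFilter A box dia)) :=
  {X | ∃ x y : A, box x ∈ F.1 ∧ dia y ∉ F.1 ∧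
    eta box dia x ∩ (eta box dia y)ᶜ ⊆ X}

theorem exists_isPrime_ideal_of_not_le {A : Type*} [DistribLattice A] {x y : A} (hxy : ¬ x ≤ y) :
    ∃ J : Order.Ideal A, J.IsPrime ∧ x ∉ J ∧ y ∈ J := by
  have hdisj : Disjoint (Order.PFilter.principal x : Set A) (Order.Ideal.principal y : Set A) :=
    Set.disjoint_left.2 fun _ hxz hzy => hxy (le_trans hxz hzy)
  obtain ⟨J, hJ, hyJ, hxJ⟩ := DistribLattice.prime_ideal_of_disjoint_filter_ideal hdisj
  exact ⟨J, hJ, Set.disjoint_left.1 hxJ (Order.PFilter.mem_principal.2 le_rfl),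
    hyJ Order.Ideal.mem_principal_self⟩

section

variable {A : Type*} [DistribLattice A] [BoundedOrder A] {box dia : A → A}

namespace IsGLDFilter

variable {F : Set A} {x y : A}

theorem top_mem (hF : IsGLDFilter box dia F) : ⊤ ∈ F :=
  let ⟨x, hx⟩ := hF.nonempty
  hF.mem_of_le x ⊤ hx le_top

theorem inf_mem_iff (hF : IsGLDFilter box dia F) : x ⊓ y ∈ F ↔ x ∈ F ∧ y ∈ F :=
  ⟨fun h => ⟨hF.mem_of_le _ _ h inf_le_left, hF.mem_of_le _ _ h inf_le_right⟩,
    fun h => hF.inf_mem x y h.1 h.2⟩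

theorem sup_mem_iff (hF : IsGLDFilter box dia F) : x ⊔ y ∈ F ↔ x ∈ F ∨ y ∈ F :=
  ⟨hF.prime x y, fun h => h.elim (fun hx => hF.mem_of_le _ _ hx le_sup_left)
    (fun hy => hF.mem_of_le _ _ hy le_sup_right)⟩

theorem compl_of_isPrime {J : Order.Ideal A} (hJ : J.IsPrime)
    (hgld : ∃ n : ℕ, dia^[n] ⊤ ∈ J ∧ box^[n] ⊥ ∉ J) : IsGLDFilter box dia (J : Set A)ᶜ where
  nonempty := ⟨⊤, hJ.toIsProper.top_notMem⟩
  mem_of_le _ _ hx hxy hy := hx (J.lower hxy hy)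
  inf_mem _ _ hx hy hxy := (hJ.mem_or_mem hxy).elim hx hy
  bot_not_mem hbot := hbot J.bot_mem
  prime _ _ hxy := not_and_or.1 fun ⟨hx, hy⟩ => hxy (J.sup_mem hx hy)
  gld := hgld.imp fun _ ⟨hdia, hbox⟩ => ⟨fun h => h hdia, hbox⟩

end IsGLDFilter

theorem eta_inf (x y : A) : eta box dia (x ⊓ y) = eta box dia x ∩ eta box dia y :=
  Set.ext fun F => F.2.inf_mem_iff

theorem eta_sup (x y : A) : eta box dia (x ⊔ y) = eta box dia x ∪ eta box dia y :=
  Set.ext fun F => F.2.sup_mem_iff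

theorem exists_gldFilter_of_not_inf_iterate_le_sup_iterate (hbox : Monotone box)
    (hdia : Monotone dia) {a c : A} {n m : ℕ} (hac : ¬ a ⊓ box^[n] ⊥ ≤ c ⊔ dia^[m] ⊤) :
    ∃ F : GLDFilter A box dia, a ∈ F.1 ∧ c ∉ F.1 := by
  obtain ⟨J, hJ, hleft, hright⟩ := exists_isPrime_ideal_of_not_le hac
  have hbox_le : box^[n] ⊥ ≤ box^[max n m] ⊥ :=
    hbox.monotone_iterate_of_le_map bot_le (le_max_left n m)
  have hdia_le : dia^[max n m] ⊤ ≤ dia^[m] ⊤ :=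
    hdia.antitone_iterate_of_map_le le_top (le_max_right n m)
  have hgld : dia^[max n m] ⊤ ∈ J ∧ box^[max n m] ⊥ ∉ J :=
    ⟨J.lower (hdia_le.trans le_sup_right) hright,
      fun h => hleft (J.lower (inf_le_right.trans hbox_le) h)⟩
  exact ⟨⟨(J : Set A)ᶜ, .compl_of_isPrime hJ ⟨_, hgld⟩⟩,
    fun ha => hleft (J.lower inf_le_left ha), fun hc => hc (J.lower le_sup_left hright)⟩

theorem le_of_eta_subset_eta (hbox : Monotone box) (hdia : Monotone dia)
    (hlub : ∀ x : A, IsLUB {y : A | ∃ n : ℕ, y = x ⊓ box^[n] ⊥} x)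
    (hglb : ∀ x : A, IsGLB {y : A | ∃ n : ℕ, y = x ⊔ dia^[n] ⊤} x) {a c : A}
    (hac : eta box dia a ⊆ eta box dia c) : a ≤ c := by
  refine (hlub a).2 ?_
  rintro _ ⟨n, rfl⟩
  refine (hglb c).2 ?_
  rintro _ ⟨m, rfl⟩
  by_contra hle
  obtain ⟨F, ha, hc⟩ := exists_gldFilter_of_not_inf_iterate_le_sup_iterate hbox hdia hle
  exact hc (hac ha)

variable {F : GLDFilter A box dia}

theorem inter_mem_canonN (box_inf : ∀ x y : A, box (x ⊓ y) = box x ⊓ box y)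
    (dia_sup : ∀ x y : A, dia (x ⊔ y) = dia x ⊔ dia y) {X Y : Set (GLDFilter A box dia)}
    (hX : X ∈ canonN box dia F) (hY : Y ∈ canonN box dia F) : X ∩ Y ∈ canonN box dia F := by
  obtain ⟨a, b, ha, hb, hX⟩ := hX
  obtain ⟨a', b', ha', hb', hY⟩ := hY
  refine ⟨a ⊓ a', b ⊔ b', ?_, ?_, ?_⟩
  · rw [box_inf]
    exact F.2.inf_mem _ _ ha ha'
  · rw [dia_sup, F.2.sup_mem_iff]
    exact not_or.2 ⟨hb, hb'⟩
  · rw [eta_inf, eta_sup, Set.compl_union, Set.inter_inter_inter_comm]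
    exact Set.inter_subset_inter hX hY

theorem eta_mem_canonN (dia_bot : dia ⊥ = ⊥) {x : A} (hx : box x ∈ F.1) :
    eta box dia x ∈ canonN box dia F :=
  ⟨x, ⊥, hx, dia_bot.symm ▸ F.2.bot_not_mem, Set.inter_subset_left⟩

theorem compl_eta_mem_canonN (box_top : box ⊤ = ⊤) {x : A} (hx : dia x ∉ F.1) :
    (eta box dia x)ᶜ ∈ canonN box dia F :=
  ⟨⊤, x, box_top.symm ▸ F.2.top_mem, hx, Set.inter_subset_right⟩

theorem box_mem_of_eta_mem_canonN (hbox : Monotone box)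
    (box_sup_le : ∀ x y : A, box (x ⊔ y) ≤ box x ⊔ dia y)
    (hsep : ∀ a c : A, eta box dia a ⊆ eta box dia c → a ≤ c) {x : A}
    (hx : eta box dia x ∈ canonN box dia F) : box x ∈ F.1 := by
  obtain ⟨a, b, ha, hb, hsub⟩ := hx
  have hle : a ≤ x ⊔ b := hsep _ _ <| by
    rwa [eta_sup, Set.union_comm, ← Set.sdiff_subset_iff]
  have hmem : box x ⊔ dia b ∈ F.1 :=
    F.2.mem_of_le _ _ ha ((hbox hle).trans (box_sup_le x b))
  exact (F.2.prime _ _ hmem).resolve_right hb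

theorem dia_notMem_of_compl_eta_mem_canonN (hdia : Monotone dia)
    (inf_dia_le : ∀ x y : A, box x ⊓ dia y ≤ dia (x ⊓ y))
    (hsep : ∀ a c : A, eta box dia a ⊆ eta box dia c → a ≤ c) {x : A}
    (hx : (eta box dia x)ᶜ ∈ canonN box dia F) : dia x ∉ F.1 := by
  obtain ⟨a, b, ha, hb, hsub⟩ := hx
  have hle : a ⊓ x ≤ b := hsep _ _ <| by
    rw [eta_inf]
    exact fun G ⟨hGa, hGx⟩ => by_contra fun hGb => hsub ⟨hGa, hGb⟩ hGx
  intro hdx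
  exact hb (F.2.mem_of_le _ _ (F.2.inf_mem _ _ ha hdx) ((inf_dia_le a x).trans (hdia hle)))

end

theorem stmt5_general {A : Type*} [DistribLattice A] [BoundedOrder A] {box dia : A → A}
    (box_top : box ⊤ = ⊤) (dia_bot : dia ⊥ = ⊥)
    (box_sup_le : ∀ x y : A, box (x ⊔ y) ≤ box x ⊔ dia y)
    (inf_dia_le : ∀ x y : A, box x ⊓ dia y ≤ dia (x ⊓ y))
    (dia_sup : ∀ x y : A, dia (x ⊔ y) = dia x ⊔ dia y)
    (box_inf : ∀ x y : A, box (x ⊓ y) = box x ⊓ box y)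
    (hlub : ∀ x : A, IsLUB {y : A | ∃ n : ℕ, y = x ⊓ box^[n] ⊥} x)
    (hglb : ∀ x : A, IsGLB {y : A | ∃ n : ℕ, y = x ⊔ dia^[n] ⊤} x) :
    IsGLDFilterFrame box dia (canonN box dia) := by
  have hbox : Monotone box := .of_map_inf box_inf
  have hdia : Monotone dia := .of_map_sup dia_sup
  have hsep (a c : A) : eta box dia a ⊆ eta box dia c → a ≤ c :=
    le_of_eta_subset_eta hbox hdia hlub hglb
  exact
    { nonempty := fun F => ⟨_, eta_mem_canonN (x := ⊤) dia_bot (box_top.symm ▸ F.2.top_mem)⟩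
      mem_of_subset := fun _ _ _ ⟨a, b, ha, hb, hX⟩ hXY => ⟨a, b, ha, hb, hX.trans hXY⟩
      inter_mem := fun _ _ _ => inter_mem_canonN box_inf dia_sup
      eta_mem := fun _ _ => eta_mem_canonN dia_bot
      compl_eta_mem := fun _ _ => compl_eta_mem_canonN box_top
      eta_not_mem := fun _ _ => mt (box_mem_of_eta_mem_canonN hbox box_sup_le hsep)
      compl_eta_not_mem := fun _ _ hx h =>
        dia_notMem_of_compl_eta_mem_canonN hdia inf_dia_le hsep h hx }

/-- For a GLD-lattice `A`, the canonical neighborhood map is a GLD-filter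
frame of `A`; in particular conditions (1) and (2) of the definition hold. -/
theorem stmt5 {A : Type*} [DistribLattice A] [BoundedOrder A] (box dia : A → A)
    (h : IsGLDLattice box dia) :
    IsGLDFilterFrame box dia (canonN box dia) :=
  stmt5_general h.box_top h.dia_bot h.box_sup_le h.inf_dia_le h.dia_sup h.box_inf
    h.isLUB_inf_boxIter h.isGLB_sup_diaIter
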